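/- (Marstrand Slicing Theorem) Let M₁ and M₂ be Riemannian manifolds, let A₁ ⊆ M₁ and B ⊆ M₁ × M₂, and for a ∈ A₁ let B_a denote the intersection of B with {a} × M₂. If B_a is nonempty for every a ∈ A₁, then dim(B) ≥ dim(A₁) + inf_{a ∈ A₁} dim(B_a), where dim denotes Hausdorff dimension. -/

import Mathlib

/-!
The inequality is a coarea-type estimate, and the proof works for arbitrary metric spaces.

Let `f : Z → X` be `1`-Lipschitz, `B ⊆ Z`, `t ≥ 0`, `s + t > 0`, `μH[s + t] B = 0`, and suppose
that `μH[t]` is positive on the fibre `B ∩ f ⁻¹' {a}` for every `a ∈ A`. Then `μH[s'] A = 0` for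
every `s' ≥ 0` with `s' > s` (`hausdorffMeasure_base_eq_zero`). By countable additivity, all
fibres may be assumed to have `t`-dimensional pre-measure at least `2⁻ⁿ` at scale `2⁻ⁿ`, for one
fixed `n`. Cover `B` by sets `E i` of diameter at most `2^(-k i)` with `∑ 2^(-k i (s + t))` small.
Over `a ∈ A` the sets `E i` that meet the fibre cover it, so `∑_{i : a ∈ f(E i)} 2^(-k i t) ≥
2⁻ⁿ`: the images `f(E i)`, weighted by `2^(-k i t)`, form a weighted cover of `A` with small
`s`-dimensional sum.

A weighted cover is turned into an honest one scale by scale.  By pigeonhole, each `a ∈ A` lies in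
some `A_k`, the set of points that receive weight at least `β 2^(-k (s' - s))` from the indices with
`k i = k`; this is where the exponent loss `s' - s` is spent.  Distinct points of a maximal
`2⁻ᵏ`-separated subset of `A_k` lie in different sets `f(E i)` with `k i = k`, so the total weight
at level `k` bounds the number of these points (`separated_count`), and the balls of radius `2⁻ᵏ`
around them cover `A_k`.

The theorem follows with `f = Prod.fst`, choosing `s < dimH A₁` and `t < inf dimH B_a` with
`dimH B < s + t`.
-/

open scoped ENNReal

/-- `M` is locally bi-Lipschitz equivalent to Euclidean space `ℝ^n` (the metric structure
of an `n`-dimensional Riemannian manifold). -/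
def LocallyBiLipschitzEuclidean (M : Type*) [MetricSpace M] (n : ℕ) : Prop :=
  ∀ x : M, ∃ (U : Set M) (f : M → EuclideanSpace ℝ (Fin n)) (K : ℝ),
    1 ≤ K ∧ x ∈ U ∧ IsOpen U ∧
    ∀ y ∈ U, ∀ z ∈ U,
      dist y z ≤ K * dist (f y) (f z) ∧ dist (f y) (f z) ≤ K * dist y z

open MeasureTheory Metric Set Filter Topology
open scoped NNReal

/-! ### Dyadic scales and dyadic covers -/

/-- The dyadic scale `2⁻ᵏ`. -/
noncomputable def mesh (k : ℕ) : ℝ≥0∞ := 2⁻¹ ^ k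

lemma mesh_ne_top (k : ℕ) : mesh k ≠ ∞ := by simp [mesh]

lemma mesh_ne_zero (k : ℕ) : mesh k ≠ 0 := by simp [mesh]

lemma mesh_pos (k : ℕ) : 0 < mesh k := pos_iff_ne_zero.2 (mesh_ne_zero k)

lemma mesh_rpow_ne_zero (k : ℕ) (d : ℝ) : mesh k ^ d ≠ 0 :=
  (ENNReal.rpow_pos (mesh_pos k) (mesh_ne_top k)).ne'

lemma mesh_anti : Antitone mesh := fun _ _ h =>
  pow_le_pow_right_of_le_one' (by simp) h

lemma two_mul_mesh_succ (k : ℕ) : 2 * mesh (k + 1) = mesh k := by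
  rw [mesh, pow_succ', ← mul_assoc, ENNReal.mul_inv_cancel (by simp) (by simp), one_mul, mesh]

lemma exists_mesh_lt {a : ℝ≥0∞} (ha : a ≠ 0) : ∃ k, mesh k < a :=
  ENNReal.exists_inv_two_pow_lt ha

lemma tendsto_mesh : Tendsto mesh atTop (𝓝 0) :=
  ENNReal.tendsto_pow_atTop_nhds_zero_of_lt_one (by simp)

lemma mesh_rpow (k : ℕ) (d : ℝ) : mesh k ^ d = ((2⁻¹ : ℝ≥0∞) ^ d) ^ k := by
  rw [mesh, ← ENNReal.rpow_natCast, ← ENNReal.rpow_natCast, ← ENNReal.rpow_mul,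
    ← ENNReal.rpow_mul, mul_comm]

lemma tsum_mesh_rpow_ne_top {d : ℝ} (hd : 0 < d) : ∑' k, mesh k ^ d ≠ ∞ := by
  simp_rw [mesh_rpow]
  exact (tsum_geometric_lt_top.2 (ENNReal.rpow_lt_one (by simp) hd)).ne

lemma exists_mesh_rpow_lt {d : ℝ} (hd : 0 < d) {e : ℝ≥0∞} (he : e ≠ 0) (K : ℕ) :
    ∃ k, K ≤ k ∧ mesh k ^ d < e := by
  have h : Tendsto (fun k => mesh k ^ d) atTop (𝓝 0) := by
    simpa [ENNReal.zero_rpow_of_pos hd] using tendsto_mesh.ennrpow_const d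
  exact ((eventually_ge_atTop K).and (h.eventually_lt_const (pos_iff_ne_zero.2 he))).exists

/-- Rounding a diameter `x` up to a dyadic scale costs a bounded factor, plus an arbitrarily small
additive error that takes care of `x = 0`. -/
lemma exists_dyadic_round {d : ℝ} (hd : 0 < d) {e : ℝ≥0∞} (he : e ≠ 0) {K : ℕ} {x : ℝ≥0∞}
    (hx : x ≤ mesh K) : ∃ k, K ≤ k ∧ x ≤ mesh k ∧ mesh k ^ d ≤ 2 ^ d * x ^ d + e := by
  classical
  obtain ⟨M, hKM, hM⟩ := exists_mesh_rpow_lt hd he K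
  by_cases hxM : x ≤ mesh M
  · exact ⟨M, hKM, hxM, hM.le.trans le_add_self⟩
  have hk := Nat.findGreatest_spec (P := fun k => x ≤ mesh k) hKM hx
  have hKk := Nat.le_findGreatest (P := fun k => x ≤ mesh k) hKM hx
  have hkM := Nat.findGreatest_le (P := fun k => x ≤ mesh k) M
  have hkmax := fun j => Nat.findGreatest_is_greatest (P := fun k => x ≤ mesh k) (n := M) (k := j)
  generalize Nat.findGreatest (fun k => x ≤ mesh k) M = k at hk hKk hkM hkmax
  have hne : k ≠ M := fun h => hxM (h ▸ hk)
  have h1 : mesh (k + 1) ≤ x := le_of_not_ge (hkmax (k + 1) (by omega) (by omega))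
  refine ⟨k, hKk, hk, le_add_right ?_⟩
  rw [← ENNReal.mul_rpow_of_nonneg _ _ hd.le, ← two_mul_mesh_succ k]
  gcongr

lemma exists_dyadic_cover {Z : Type*} [EMetricSpace Z] [MeasurableSpace Z] [BorelSpace Z]
    {B : Set Z} {d : ℝ} (hd : 0 < d) (hB : μH[d] B = 0) (K : ℕ) {ε : ℝ≥0∞} (hε : ε ≠ 0) :
    ∃ (E : ℕ → Set Z) (k : ℕ → ℕ), B ⊆ ⋃ i, E i ∧ (∀ i, ediam (E i) ≤ mesh (k i)) ∧
      (∀ i, K ≤ k i) ∧ ∑' i, mesh (k i) ^ d ≤ ε := by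
  have h2 : (2 : ℝ≥0∞) ^ d ≠ ∞ := ENNReal.rpow_ne_top_of_nonneg hd.le (by simp)
  have h20 : (2 : ℝ≥0∞) ^ d ≠ 0 := (ENNReal.rpow_pos (by simp) (by simp)).ne'
  have hε2 : ε / 2 ≠ 0 := (ENNReal.half_pos hε).ne'
  rw [Measure.hausdorffMeasure_apply] at hB
  have hK : (⨅ (t : ℕ → Set Z) (_ : B ⊆ ⋃ n, t n) (_ : ∀ n, ediam (t n) ≤ mesh K),
      ∑' n, ⨆ _ : (t n).Nonempty, ediam (t n) ^ d) < (ε / 2) / 2 ^ d := by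
    refine lt_of_le_of_lt ?_ (ENNReal.div_pos hε2 h2)
    rw [← hB]
    exact le_iSup₂_of_le (mesh K) (mesh_pos K) le_rfl
  simp only [iInf_lt_iff] at hK
  obtain ⟨E, hBE, hEK, hsum⟩ := hK
  obtain ⟨e, he0, he⟩ := ENNReal.exists_pos_sum_of_countable' hε2 ℕ
  choose k hKk hEk hk using fun i => exists_dyadic_round hd (he0 i).ne' (hEK i)
  refine ⟨E, k, hBE, hEk, hKk, ?_⟩
  calc ∑' i, mesh (k i) ^ d ≤ ∑' i, (2 ^ d * ediam (E i) ^ d + e i) := ENNReal.tsum_le_tsum hk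
    _ = 2 ^ d * ∑' i, ediam (E i) ^ d + ∑' i, e i := by
      rw [ENNReal.tsum_add, ENNReal.tsum_mul_left]
    _ ≤ 2 ^ d * ((ε / 2) / 2 ^ d) + ε / 2 := by
      gcongr
      refine le_trans (ENNReal.tsum_le_tsum fun i => ?_) hsum.le
      rcases (E i).eq_empty_or_nonempty with h | h
      · simp [h, ENNReal.zero_rpow_of_pos hd]
      · simp [h]
    _ = ε := by rw [ENNReal.mul_div_cancel h20 h2, ENNReal.add_halves]

/-! ### Separated nets and weighted covers -/

lemma exists_separated_net {X : Type*} [EMetricSpace X] (A : Set X) (r : ℝ≥0∞) :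
    ∃ P ⊆ A, IsSeparated r P ∧ A ⊆ ⋃ p : P, closedEBall (p : X) r := by
  obtain ⟨P, hP⟩ := zorn_subset {P | P ⊆ A ∧ IsSeparated r P} fun c hc hchain =>
    ⟨⋃₀ c, ⟨sUnion_subset fun s hs => (hc hs).1,
      (pairwise_sUnion hchain.directedOn).2 fun s hs => (hc hs).2⟩,
      fun s hs => subset_sUnion_of_mem hs⟩
  refine ⟨P, hP.prop.1, hP.prop.2, fun x hx => ?_⟩
  by_contra hcon
  simp only [mem_iUnion, mem_closedEBall, not_exists, not_le] at hcon
  have hins : insert x P ⊆ P := hP.le_of_ge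
    ⟨insert_subset hx hP.prop.1, hP.prop.2.insert fun y hy _ => hcon ⟨y, hy⟩⟩
    (subset_insert x P)
  simpa using hcon ⟨x, hins (mem_insert x P)⟩

/-- Double counting: if each point of an `r`-separated set `P` receives weight at least `c` from
sets `F i` of diameter at most `r`, then `c` times the number of points of `P` is at most the total
weight. -/
lemma separated_count {X : Type*} [EMetricSpace X] {P : Set X} {r c : ℝ≥0∞} (hP : IsSeparated r P)
    (F : ℕ → Set X) (w : ℕ → ℝ≥0∞) (hF : ∀ i, w i ≠ 0 → ediam (F i) ≤ r)
    (hc : ∀ p ∈ P, c ≤ ∑' i, (F i).indicator (fun _ => w i) p) :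
    ∑' _ : P, c ≤ ∑' i, w i := by
  calc ∑' _ : P, c ≤ ∑' p : P, ∑' i, (F i).indicator (fun _ => w i) (p : X) :=
        ENNReal.tsum_le_tsum fun p => hc p p.2
    _ = ∑' i, ∑' p : P, (F i).indicator (fun _ => w i) (p : X) := ENNReal.tsum_comm
    _ ≤ ∑' i, w i := ENNReal.tsum_le_tsum fun i => ?_
  by_cases hw : w i = 0
  · simp [hw]
  by_cases hex : ∃ p : P, (p : X) ∈ F i
  · obtain ⟨p, hp⟩ := hex
    rw [tsum_eq_single p]
    · exact indicator_le_self _ _ _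
    · intro p' hne
      refine indicator_of_notMem (fun hp' => ?_) _
      exact absurd (hP p'.2 p.2 (fun h => hne (Subtype.ext h)))
        ((edist_le_ediam_of_mem hp' hp).trans (hF i hw)).not_gt
  · have : ∀ p : P, (F i).indicator (fun _ => w i) (p : X) = 0 := fun p =>
      indicator_of_notMem (fun h => hex ⟨p, h⟩) _
    simp [this]

/-- A weighted cover of `A` by sets `F i` of diameter at most `2^(-k i)`, with weights
`2^(-k i t)` adding up to at least `2⁻ⁿ` at each point of `A`, yields a countable cover of `A`
whose `s'`-dimensional sum is controlled by `∑ 2^(-k i (s + t))`. The constant `β` is admissible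
as soon as the levels `β 2^(-k (s' - s))` sum to less than `2⁻ⁿ`. -/
lemma exists_cover_of_weighted_cover {X : Type*} [EMetricSpace X] {A : Set X} {s t s' : ℝ}
    (hs' : 0 ≤ s') {n K : ℕ} {β ε : ℝ≥0∞} (hβ0 : β ≠ 0) (hβt : β ≠ ∞) (hε : ε ≠ ∞)
    (hβ : ∑' k, β * mesh k ^ (s' - s) < mesh n) (F : ℕ → Set X) (k : ℕ → ℕ)
    (hF : ∀ i, ediam (F i) ≤ mesh (k i)) (hk : ∀ i, K ≤ k i)
    (hA : ∀ a ∈ A, mesh n ≤ ∑' i, (F i).indicator (fun _ => mesh (k i) ^ t) a)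
    (hsum : ∑' i, mesh (k i) ^ (s + t) ≤ ε) :
    ∃ P : ℕ → Set X, (∀ j, (P j).Countable) ∧ (∀ j, (P j).Nonempty → K ≤ j) ∧
      A ⊆ ⋃ q : Σ j, P j, closedEBall (q.2 : X) (mesh q.1) ∧
      ∑' q : Σ j, P j, ediam (closedEBall (q.2 : X) (mesh q.1)) ^ s' ≤ 2 ^ s' * (ε / β) := by
  classical
  -- the weight of the index `i` at level `j`
  let w : ℕ → ℕ → ℝ≥0∞ := fun j i => if k i = j then mesh (k i) ^ t else 0
  let A' : ℕ → Set X := fun j =>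
    {a | a ∈ A ∧ β * mesh j ^ (s' - s) ≤ ∑' i, (F i).indicator (fun _ => w j i) a}
  have hAA' : ∀ a ∈ A, ∃ j, a ∈ A' j := by
    intro a ha
    by_contra! hcon
    have hlt : ∀ j, ∑' i, (F i).indicator (fun _ => w j i) a ≤ β * mesh j ^ (s' - s) := fun j =>
      le_of_not_ge fun h => hcon j ⟨ha, h⟩
    refine absurd hβ (not_lt.2 ((hA a ha).trans ?_))
    refine le_trans (le_of_eq ?_) (ENNReal.tsum_le_tsum hlt)
    rw [ENNReal.tsum_comm]
    refine tsum_congr fun i => ?_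
    rw [tsum_eq_single (k i)]
    · simp [w]
    · intro j hj
      simp [w, hj.symm]
  choose P hPA hPsep hPcov using fun j => exists_separated_net (A' j) (mesh j)
  have hw : ∀ j i, w j i * mesh j ^ s = if k i = j then mesh (k i) ^ (s + t) else 0 := by
    intro j i
    by_cases h : k i = j
    · subst h
      simp only [w, if_true]
      rw [ENNReal.rpow_add _ _ (mesh_ne_zero _) (mesh_ne_top _), mul_comm]
    · simp [w, h]
  have hcount : ∀ j, β * ∑' _ : P j, mesh j ^ s' ≤
      ∑' i, if k i = j then mesh (k i) ^ (s + t) else 0 := by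
    intro j
    have h := separated_count (c := β * mesh j ^ (s' - s)) (hPsep j) F (w j) (fun i hi => by
      have : k i = j := by
        by_contra h
        exact hi (by simp [w, h])
      exact this ▸ hF i) (fun p hp => (hPA j hp).2)
    calc β * ∑' _ : P j, mesh j ^ s' = (∑' _ : P j, β * mesh j ^ (s' - s)) * mesh j ^ s := by
          rw [← ENNReal.tsum_mul_right, ← ENNReal.tsum_mul_left]
          refine tsum_congr fun _ => ?_
          rw [mul_assoc, ← ENNReal.rpow_add _ _ (mesh_ne_zero _) (mesh_ne_top _), sub_add_cancel]
      _ ≤ (∑' i, w j i) * mesh j ^ s := by gcongr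
      _ = _ := by rw [← ENNReal.tsum_mul_right]; exact tsum_congr (hw j)
  have htot : β * ∑' j, ∑' _ : P j, mesh j ^ s' ≤ ε := by
    rw [← ENNReal.tsum_mul_left]
    refine (ENNReal.tsum_le_tsum hcount).trans ?_
    rw [ENNReal.tsum_comm]
    simpa using hsum
  have htot' : ∑' j, ∑' _ : P j, mesh j ^ s' ≤ ε / β := by
    rw [ENNReal.le_div_iff_mul_le (Or.inl hβ0) (Or.inl hβt), mul_comm]
    exact htot
  have hfin : ε / β ≠ ∞ := ENNReal.div_ne_top hε hβ0
  refine ⟨P, fun j => ?_, fun j ⟨p, hp⟩ => ?_, fun a ha => ?_, ?_⟩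
  · have h1 : ∑' _ : P j, mesh j ^ s' ≠ ∞ :=
      ((ENNReal.le_tsum j).trans htot').trans_lt hfin.lt_top |>.ne
    have h2 := Summable.countable_support_ennreal h1
    rw [Function.support_const (mesh_rpow_ne_zero j s')] at h2
    exact countable_coe_iff.1 (countable_univ_iff.1 h2)
  · -- no index has level below `K`, so the level-`j` weights vanish for `j < K`
    by_contra hjK
    have h := (hPA j hp).2
    have h0 : ∀ i, w j i = 0 := fun i => if_neg (by have := hk i; omega)
    simp [h0, hβ0, mesh_ne_zero, mesh_ne_top] at h
  · obtain ⟨j, hj⟩ := hAA' a ha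
    obtain ⟨p, hp⟩ := mem_iUnion.1 (hPcov j hj)
    exact mem_iUnion.2 ⟨⟨j, p⟩, hp⟩
  · calc ∑' q : Σ j, P j, ediam (closedEBall (q.2 : X) (mesh q.1)) ^ s'
        ≤ ∑' q : Σ j, P j, 2 ^ s' * mesh q.1 ^ s' := by
          refine ENNReal.tsum_le_tsum fun q => ?_
          rw [← ENNReal.mul_rpow_of_nonneg _ _ hs']
          gcongr
          exact ediam_closedEBall_le
      _ = 2 ^ s' * ∑' j, ∑' _ : P j, mesh j ^ s' := by
          rw [ENNReal.tsum_mul_left, ENNReal.tsum_sigma']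
      _ ≤ _ := by gcongr

/-! ### The coarea-type estimate -/

/-- If a set has positive Hausdorff measure, then for some `n` every cover by sets of diameter at
most `2⁻ⁿ` has `t`-dimensional sum at least `2⁻ⁿ`. -/
lemma exists_content_lower_bound {Z : Type*} [EMetricSpace Z] [MeasurableSpace Z] [BorelSpace Z]
    {F : Set Z} {t : ℝ} (hF : μH[t] F ≠ 0) :
    ∃ n : ℕ, ∀ U : ℕ → Set Z, F ⊆ ⋃ i, U i → (∀ i, ediam (U i) ≤ mesh n) →
      mesh n ≤ ∑' i, ⨆ _ : (U i).Nonempty, ediam (U i) ^ t := by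
  rw [Measure.hausdorffMeasure_apply, ← pos_iff_ne_zero] at hF
  simp only [lt_iSup_iff] at hF
  obtain ⟨r, hr, hlt⟩ := hF
  obtain ⟨n, hn⟩ := exists_mesh_lt (lt_min hr hlt).ne'
  refine ⟨n, fun U hU hd => (hn.le.trans (min_le_right _ _)).trans ?_⟩
  exact iInf_le_of_le U (iInf₂_le hU fun i => (hd i).trans (hn.le.trans (min_le_left _ _)))

/-- The coarea-type estimate: if `B` is `μH[s + t]`-null and the fibres of `B` over `A` under a
`1`-Lipschitz map all have positive `t`-dimensional measure, then `A` is `μH[s']`-null for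
`s' > s`. A positive `s + t` is what makes dyadic covers of `B` available. -/
lemma hausdorffMeasure_base_eq_zero {X Z : Type*} [EMetricSpace X] [MeasurableSpace X]
    [BorelSpace X] [EMetricSpace Z] [MeasurableSpace Z] [BorelSpace Z] {f : Z → X}
    (hf : LipschitzWith 1 f) {A : Set X} {B : Set Z} {s t s' : ℝ} (ht : 0 ≤ t) (hst : 0 < s + t)
    (hss' : s < s') (hs' : 0 ≤ s') (hB : μH[s + t] B = 0)
    (hA : ∀ a ∈ A, μH[t] (B ∩ f ⁻¹' {a}) ≠ 0) : μH[s'] A = 0 := by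
  let A' : ℕ → Set X := fun n => {a | ∀ U : ℕ → Set Z, B ∩ f ⁻¹' {a} ⊆ ⋃ i, U i →
    (∀ i, ediam (U i) ≤ mesh n) → mesh n ≤ ∑' i, ⨆ _ : (U i).Nonempty, ediam (U i) ^ t}
  have hAA' : A ⊆ ⋃ n, A' n := fun a ha =>
    mem_iUnion.2 (exists_content_lower_bound (hA a ha))
  refine measure_mono_null hAA' (measure_iUnion_null fun n => ?_)
  have hS := tsum_mesh_rpow_ne_top (sub_pos.2 hss')
  obtain ⟨β, hβ0, hβt, hβ⟩ : ∃ β : ℝ≥0∞, β ≠ 0 ∧ β ≠ ∞ ∧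
      ∑' k, β * mesh k ^ (s' - s) < mesh n := by
    obtain ⟨β, hβ0, hβ⟩ := ENNReal.exists_nnreal_pos_mul_lt hS (mesh_ne_zero n)
    exact ⟨β, by simpa using hβ0.ne', by simp, by rwa [ENNReal.tsum_mul_left]⟩
  have key : ∀ N : ℕ, ∃ P : ℕ → Set X, (∀ j, (P j).Countable) ∧
      (∀ j, (P j).Nonempty → n + N ≤ j) ∧
      A' n ⊆ ⋃ q : Σ j, P j, closedEBall (q.2 : X) (mesh q.1) ∧
      ∑' q : Σ j, P j, ediam (closedEBall (q.2 : X) (mesh q.1)) ^ s' ≤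
        2 ^ s' * (mesh N / β) := by
    intro N
    obtain ⟨E, k, hBE, hE, hk, hsum⟩ := exists_dyadic_cover hst hB (n + N) (mesh_ne_zero N)
    refine exists_cover_of_weighted_cover hs' hβ0 hβt (mesh_ne_top N) hβ (fun i => f '' E i) k
      (fun i => ?_) hk (fun a ha => ?_) hsum
    · exact (by simpa using hf.ediam_image_le (E i) : ediam (f '' E i) ≤ ediam (E i)).trans (hE i)
    · refine (ha (fun i => E i ∩ f ⁻¹' {a}) ?_ fun i => ?_).trans
        (ENNReal.tsum_le_tsum fun i => ?_)
      · rw [← iUnion_inter]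
        exact inter_subset_inter_left _ hBE
      · exact ((ediam_mono inter_subset_left).trans (hE i)).trans
          (mesh_anti ((Nat.le_add_right n N).trans (hk i)))
      · refine iSup_le fun hne => ?_
        obtain ⟨z, hz, hza⟩ := hne
        rw [indicator_of_mem (show a ∈ f '' E i from ⟨z, hz, hza⟩)]
        gcongr
        exact (ediam_mono inter_subset_left).trans (hE i)
  choose P hPc hPk hPcov hPsum using key
  have (N : ℕ) : Countable (Σ j, P N j) := by
    have (j : ℕ) : Countable (P N j) := (hPc N j).to_subtype
    infer_instance
  have hle := Measure.hausdorffMeasure_le_liminf_tsum (l := atTop) s' (A' n)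
    (ι := fun N => Σ j, P N j) (fun N => 2 * mesh N)
    (by simpa using ENNReal.Tendsto.const_mul tendsto_mesh (Or.inr (by simp : (2 : ℝ≥0∞) ≠ ∞)))
    (fun N q => closedEBall (q.2 : X) (mesh q.1))
    (Eventually.of_forall fun N q => ediam_closedEBall_le.trans (by
      gcongr
      exact mesh_anti ((Nat.le_add_left N n).trans (hPk N q.1 ⟨q.2, q.2.2⟩))))
    (Eventually.of_forall hPcov)
  have hlim : Tendsto (fun N => 2 ^ s' * (mesh N / β)) atTop (𝓝 0) := by
    have h1 : Tendsto (fun N => mesh N / β) atTop (𝓝 0) := by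
      simpa using ENNReal.Tendsto.div_const tendsto_mesh (Or.inr hβ0)
    simpa using ENNReal.Tendsto.const_mul h1
      (Or.inr (ENNReal.rpow_ne_top_of_nonneg hs' (by simp : (2 : ℝ≥0∞) ≠ ∞)))
  refine le_antisymm (hle.trans ?_) bot_le
  exact (liminf_le_liminf (Eventually.of_forall hPsum)).trans hlim.liminf_eq.le

/-! ### Slices of a product -/

lemma dimH_slice_eq {X Y : Type*} [MetricSpace X] [MetricSpace Y] (B : Set (X × Y)) (a : X) :
    dimH (B ∩ Prod.fst ⁻¹' {a}) = dimH {y : Y | (a, y) ∈ B} := by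
  have hiso : Isometry (fun y : Y => (a, y)) := fun y z => by simp [Prod.edist_eq]
  rw [← hiso.dimH_image]
  congr 1
  ext ⟨x, y⟩
  simp only [mem_inter_iff, mem_preimage, mem_singleton_iff, mem_image, mem_ofPred_eq,
    Prod.mk.injEq]
  constructor
  · rintro ⟨h, rfl⟩
    exact ⟨y, h, rfl, rfl⟩
  · rintro ⟨z, h, rfl, rfl⟩
    exact ⟨h, rfl⟩

/-- **Marstrand Slicing Theorem**: let `M₁, M₂` be Riemannian manifolds (metrically: locally
bi-Lipschitz Euclidean metric spaces, with the max-product metric on `M₁ × M₂`), `A₁ ⊆ M₁`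
nonempty and `B ⊆ M₁ × M₂`.  If the slice `B_a = {y | (a, y) ∈ B}` is nonempty for every
`a ∈ A₁`, then `dim B ≥ dim A₁ + inf_{a ∈ A₁} dim B_a` (Hausdorff dimensions). -/
theorem marstrand_slicing
    {M₁ M₂ : Type*} [MetricSpace M₁] [MetricSpace M₂] {n₁ n₂ : ℕ}
    (h₁ : LocallyBiLipschitzEuclidean M₁ n₁) (h₂ : LocallyBiLipschitzEuclidean M₂ n₂)
    (A₁ : Set M₁) (hA₁ : A₁.Nonempty) (B : Set (M₁ × M₂))
    (hne : ∀ a ∈ A₁, ∃ y : M₂, (a, y) ∈ B) :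
    dimH A₁ + ⨅ a : A₁, dimH {y : M₂ | ((a : M₁), y) ∈ B} ≤ dimH B := by
  have hfst : LipschitzWith 1 (Prod.fst : M₁ × M₂ → M₁) := LipschitzWith.prod_fst
  by_contra! hlt
  -- a zero summand is handled by projecting onto `A₁`, or by including a single slice in `B`
  by_cases hA0 : dimH A₁ = 0
  · obtain ⟨a, ha⟩ := hA₁
    rw [hA0, zero_add] at hlt
    refine hlt.not_ge ((iInf_le _ ⟨a, ha⟩).trans ?_)
    rw [← dimH_slice_eq]
    exact dimH_mono inter_subset_left
  by_cases hB0 : ⨅ a : A₁, dimH {y : M₂ | ((a : M₁), y) ∈ B} = 0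
  · rw [hB0, add_zero] at hlt
    refine hlt.not_ge (le_trans (dimH_mono fun a ha => ?_) (hfst.dimH_image_le B))
    obtain ⟨y, hy⟩ := hne a ha
    exact ⟨(a, y), hy, rfl⟩
  obtain ⟨s, hs, t, ht, hst⟩ := ENNReal.exists_lt_add_of_lt_add hlt hA0 hB0
  lift s to ℝ≥0 using hs.ne_top
  lift t to ℝ≥0 using ht.ne_top
  obtain ⟨s', hss', hs'⟩ := ENNReal.lt_iff_exists_nnreal_btwn.1 hs
  borelize M₁
  borelize (M₁ × M₂)
  have hst0 : (0 : ℝ≥0) < s + t := by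
    have h := (zero_le : 0 ≤ dimH B).trans_lt hst
    exact_mod_cast h
  have hnull : μH[s'] A₁ = 0 := by
    refine hausdorffMeasure_base_eq_zero hfst (B := B) (s := s) (t := t) t.2
      (by exact_mod_cast hst0) (by exact_mod_cast hss') s'.2 ?_ fun a ha => ?_
    · have h := hausdorffMeasure_of_dimH_lt (s := B) (d := s + t) (by exact_mod_cast hst)
      simpa using h
    · have h : (t : ℝ≥0∞) < dimH (B ∩ Prod.fst ⁻¹' {a}) := by
        rw [dimH_slice_eq]
        exact ht.trans_le (iInf_le _ (⟨a, ha⟩ : A₁))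
      simp [hausdorffMeasure_of_lt_dimH h]
  rw [hausdorffMeasure_of_lt_dimH hs'] at hnull
  exact ENNReal.top_ne_zero hnull
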